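/- Let X be a standard Borel space, E a countable Borel equivalence relation on X, and ρ : E → (0,∞) a smooth Borel cocycle. Then exactly one of the following holds: (1) there is an injective Borel compression of the quotient of ρ by a finite Borel subequivalence relation of E; (2) there is a ρ-invariant Borel probability measure on X. -/

import Mathlib

open MeasureTheory Set ENNReal

namespace CocycleNadkarni

variable {X : Type*} {Γ : Type*}

/-- The `ρ`-size of `Y` relative to the point `z`: `∑_{y ∈ Y} ρ(y, z)`. -/
noncomputable def eSize (ρ : X → X → ℝ) (Y : Set X) (z : X) : ℝ≥0∞ :=
  ∑' y : Y, ENNReal.ofReal (ρ y z)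

/-- The `ρ`-size of `Y` relative to the set `Z`, computed at the point `z`. -/
noncomputable def relSize (ρ : X → X → ℝ) (Y Z : Set X) (z : X) : ℝ≥0∞ :=
  eSize ρ Y z / eSize ρ Z z

/-- Real-valued `ρ`-size (used for finite sets). -/
noncomputable def rSize (ρ : X → X → ℝ) (Y : Set X) (z : X) : ℝ :=
  ∑' y : Y, ρ y z

/-- `∫_C f dμ^ρ_S`, computed at the point `z`. -/
noncomputable def avgOn (ρ : X → X → ℝ) (f : X → ℝ) (S C : Set X) (z : X) : ℝ :=
  (∑' y : ↥(S ∩ C), f y * ρ y z) / rSize ρ S z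

/-- countable Borel equivalence relation -/
def IsCBER [MeasurableSpace X] (E : X → X → Prop) : Prop :=
  Equivalence E ∧ MeasurableSet {p : X × X | E p.1 p.2} ∧ ∀ x : X, {y | E x y}.Countable

/-- Borel cocycle `ρ : E → (0, ∞)` (as a total function whose values off `E` are irrelevant). -/
def IsCocycle [MeasurableSpace X] (E : X → X → Prop) (ρ : X → X → ℝ) : Prop :=
  Measurable (fun p : X × X => ρ p.1 p.2) ∧
    (∀ ⦃x y : X⦄, E x y → 0 < ρ x y) ∧
    ∀ ⦃x y z : X⦄, E x y → E y z → ρ x z = ρ x y * ρ y z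

/-- Borel cocycle into a group `Γ`. -/
def IsGrpCocycle [MeasurableSpace X] [Group Γ] [MeasurableSpace Γ]
    (E : X → X → Prop) (ρ : X → X → Γ) : Prop :=
  Measurable (fun p : X × X => ρ p.1 p.2) ∧
    ∀ ⦃x y z : X⦄, E x y → E y z → ρ x z = ρ x y * ρ y z

/-- finite Borel subequivalence relation of `E` -/
def IsFinSubequiv [MeasurableSpace X] (E F : X → X → Prop) : Prop :=
  Equivalence F ∧ MeasurableSet {p : X × X | F p.1 p.2} ∧
    (∀ ⦃x y : X⦄, F x y → E x y) ∧ ∀ x : X, {y | F x y}.Finite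

/-- finite Borel subequivalence relation of `E` restricted to `W` (extended by the diagonal). -/
def IsFinSubequivOn [MeasurableSpace X] (E : X → X → Prop) (W : Set X)
    (F : X → X → Prop) : Prop :=
  Equivalence F ∧ MeasurableSet {p : X × X | F p.1 p.2} ∧
    (∀ ⦃x y : X⦄, F x y → x = y ∨ (E x y ∧ x ∈ W ∧ y ∈ W)) ∧ ∀ x : X, {y | F x y}.Finite

/-- `ρ`-invariance of a Borel measure. -/
def IsInvariant [MeasurableSpace X] (E : X → X → Prop) (ρ : X → X → ℝ)
    (μ : Measure X) : Prop :=
  ∀ T : X ≃ᵐ X, (∀ x, E (T x) x) → ∀ B : Set X, MeasurableSet B →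
    μ (T '' B) = ∫⁻ x in B, ENNReal.ofReal (ρ (T x) x) ∂μ

/-- invariance w.r.t. the restriction of `ρ` to a set `R` of pairs, via Borel injections
whose graphs are contained in `R⁻¹`. -/
def IsInvariantRel [MeasurableSpace X] (R : Set (X × X)) (ρ : X → X → ℝ)
    (μ : Measure X) : Prop :=
  ∀ (B : Set X) (T : X → X), MeasurableSet B → Measurable T → Set.InjOn T B →
    (∀ x ∈ B, ((T x, x) : X × X) ∈ R) →
    μ (T '' B) = ∫⁻ x in B, ENNReal.ofReal (ρ (T x) x) ∂μ

/-- a Borel ℕ-coloring of the lacunarity digraph `G^ρ_Z`. -/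
def HasColoring [MeasurableSpace X] (E : X → X → Prop) (ρ : X → X → Γ)
    (Z : Set Γ) : Prop :=
  ∃ c : X → ℕ, Measurable c ∧
    ∀ ⦃x y : X⦄, x ≠ y → E x y → ρ x y ∈ Z → c x ≠ c y

/-- smoothness of the cocycle `ρ` restricted to `E` restricted to `W`. -/
def SmoothOn [MeasurableSpace X] (E : X → X → Prop) (ρ : X → X → ℝ)
    (W : Set X) : Prop :=
  ∃ U : Set ℝ, IsOpen U ∧ (1:ℝ) ∈ U ∧ U ⊆ Set.Ioi 0 ∧
    ∃ c : X → ℕ, Measurable c ∧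
      ∀ ⦃x y : X⦄, x ∈ W → y ∈ W → x ≠ y → E x y → ρ x y ∈ U → c x ≠ c y

/-- smoothness of the cocycle `ρ` on `E`. -/
def Smooth [MeasurableSpace X] (E : X → X → Prop) (ρ : X → X → ℝ) : Prop :=
  SmoothOn E ρ Set.univ

/-- `E`-invariance of a set. -/
def EInvariant (E : X → X → Prop) (B : Set X) : Prop :=
  ∀ ⦃x y : X⦄, E x y → x ∈ B → y ∈ B

/-- a compression of `ρ` over the finite subequivalence relation `F` of `E`. -/
def CompressionOver [MeasurableSpace X] (E F : X → X → Prop) (ρ : X → X → ℝ)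
    (φ : X → X) : Prop :=
  (∀ x, E x (φ x)) ∧
  (∀ x : X, relSize ρ (φ ⁻¹' {y | F y x}) {y | F y x} x ≤ 1) ∧
  (∀ x : X, ∃ y, E x y ∧ relSize ρ (φ ⁻¹' {z | F z y}) {z | F z y} y < 1)

/-- a compression of the quotient of `ρ | E | W` by the finite subequivalence relation given
by the setoid `s`, expressed via representatives. -/
def QuotCompressionOn [MeasurableSpace X] (E : X → X → Prop) (ρ : X → X → ℝ)
    (W : Set X) (s : Setoid X) (φ : Quotient s → Quotient s) : Prop :=
  (∀ ⦃x : X⦄, x ∈ W → ∀ y : X, φ (Quotient.mk s x) = Quotient.mk s y → (E x y ∧ y ∈ W)) ∧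
  (∀ ⦃x : X⦄, x ∈ W →
    relSize ρ {y | y ∈ W ∧ φ (Quotient.mk s y) = Quotient.mk s x} {y | s.r y x} x ≤ 1) ∧
  (∀ ⦃x : X⦄, x ∈ W → ∃ y, y ∈ W ∧ E x y ∧
    relSize ρ {z | z ∈ W ∧ φ (Quotient.mk s z) = Quotient.mk s y} {z | s.r z y} y < 1)


/-- `B` has `ρ`-density at least `ε` relative to `W`. -/
def HasDensityAtLeastOn [MeasurableSpace X] (E : X → X → Prop) (ρ : X → X → ℝ)
    (B W : Set X) (ε : ℝ) : Prop :=
  ∃ F : X → X → Prop, IsFinSubequivOn E W F ∧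
    ∀ x ∈ W, ENNReal.ofReal ε ≤ relSize ρ (B ∩ {y | F y x}) {y | F y x} x

/-- `B` has positive `ρ`-density relative to `W`. -/
def HasPosDensityOn [MeasurableSpace X] (E : X → X → Prop) (ρ : X → X → ℝ)
    (B W : Set X) : Prop :=
  ∃ ε : ℝ, 0 < ε ∧ HasDensityAtLeastOn E ρ B W ε

/-- `B` has σ-positive `ρ`-density relative to `W`. -/
def HasSigmaPosDensityOn [MeasurableSpace X] (E : X → X → Prop) (ρ : X → X → ℝ)
    (B W : Set X) : Prop :=
  ∃ A : ℕ → Set X, (∀ n, MeasurableSet (A n)) ∧ (∀ n, A n ⊆ W) ∧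
    (∀ n, ∀ x ∈ A n, ∀ y ∈ W, E x y → y ∈ A n) ∧ W = ⋃ n, A n ∧
    ∀ n, HasPosDensityOn E ρ (B ∩ A n) (A n)

/-- Uniformization of Borel sets with at most one point in each section. -/
lemma unif_subsingleton [MeasurableSpace X] [StandardBorelSpace X]
    (P : X → X → Prop) (hP : MeasurableSet {p : X × X | P p.1 p.2})
    (hu : ∀ x y z, P x y → P x z → y = z) :
    ∃ f : X → X, Measurable f ∧ MeasurableSet {x | ∃ y, P x y} ∧
      (∀ x, (∃ y, P x y) → P x (f x)) ∧ (∀ x, (¬ ∃ y, P x y) → f x = x) := by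
  classical
  have himg : ∀ B : Set X, MeasurableSet B → MeasurableSet {x | ∃ y, P x y ∧ y ∈ B} := by
    intro B hB
    have h1 : MeasurableSet ({p : X × X | P p.1 p.2} ∩ Prod.snd ⁻¹' B) :=
      hP.inter (measurable_snd hB)
    have h2 := h1.image_of_measurable_injOn (f := Prod.fst) measurable_fst (by
      rintro ⟨a, b⟩ ⟨h, -⟩ ⟨a', b'⟩ ⟨h', -⟩ (rfl : a = a')
      simp only [mem_ofPred_eq] at h h'
      rw [hu _ _ _ h h'])
    convert h2 using 1
    ext x
    simp
  have hD : MeasurableSet {x | ∃ y, P x y} := by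
    simpa using himg univ MeasurableSet.univ
  refine ⟨fun x => if h : ∃ y, P x y then h.choose else x, ?_, hD, ?_, ?_⟩
  · intro B hB
    have : ((fun x => if h : ∃ y, P x y then h.choose else x) ⁻¹' B)
        = {x | ∃ y, P x y ∧ y ∈ B} ∪ ({x | ∃ y, P x y}ᶜ ∩ B) := by
      ext x
      by_cases h : ∃ y, P x y
      · simp only [mem_preimage, h, dif_pos, mem_union, mem_ofPred_eq, mem_inter_iff,
          mem_compl_iff, not_true_eq_false, false_and, or_false]
        constructor
        · intro hx
          exact ⟨_, h.choose_spec, hx⟩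
        · rintro ⟨y, hy, hyB⟩
          rwa [hu _ _ _ h.choose_spec hy]
      · simp only [mem_preimage, h, dif_neg, not_false_eq_true, mem_union, mem_ofPred_eq,
          mem_inter_iff, mem_compl_iff, true_and]
        constructor
        · exact Or.inr
        · rintro (⟨y, hy, -⟩ | h')
          · exact absurd ⟨y, hy⟩ h
          · exact h'
    rw [this]
    exact (himg B hB).union (hD.compl.inter hB)
  · intro x h
    simp only [h, dif_pos]
    exact h.choose_spec
  · intro x h
    simp only [h, dif_neg, not_false_eq_true]

lemma cocycle_self [MeasurableSpace X] {E : X → X → Prop} (hE : IsCBER E)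
    {ρ : X → X → ℝ} (hρ : IsCocycle E ρ) (x : X) : ρ x x = 1 := by
  have h1 := hρ.2.2 (hE.1.refl x) (hE.1.refl x)
  have h2 := hρ.2.1 (hE.1.refl x)
  nlinarith [mul_right_cancel₀ h2.ne' (by linarith : (1:ℝ) * ρ x x = ρ x x * ρ x x)]

lemma cocycle_mul_symm [MeasurableSpace X] {E : X → X → Prop} (hE : IsCBER E)
    {ρ : X → X → ℝ} (hρ : IsCocycle E ρ) {x y : X} (h : E x y) : ρ x y * ρ y x = 1 := by
  rw [← hρ.2.2 h (hE.1.symm h), cocycle_self hE hρ]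

/-- The lacunarity constant and coloring. -/
lemma exists_lacunary [MeasurableSpace X] {E : X → X → Prop} (hE : IsCBER E)
    {ρ : X → X → ℝ} (hρ : IsCocycle E ρ) (hsm : Smooth E ρ) :
    ∃ (c : X → ℕ) (δ : ℝ), Measurable c ∧ 0 < δ ∧
      ∀ x y z, E x y → E x z → c y = c z →
        ⌊Real.log (ρ y x) / δ⌋ = ⌊Real.log (ρ z x) / δ⌋ → y = z := by
  obtain ⟨U, hU, h1, -, c, hc, hcol⟩ := hsm
  have hcont : ContinuousAt Real.exp 0 := Real.continuous_exp.continuousAt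
  have hnh : Real.exp ⁻¹' U ∈ nhds (0:ℝ) := hcont (by simpa using hU.mem_nhds h1)
  obtain ⟨δ, hδ, hball⟩ := Metric.mem_nhds_iff.1 hnh
  refine ⟨c, δ, hc, hδ, ?_⟩
  intro x y z hxy hxz hyz hfl
  by_contra hne
  have hyz' : E y z := hE.1.trans (hE.1.symm hxy) hxz
  refine hcol (mem_univ y) (mem_univ z) hne hyz' ?_ hyz
  have hpy : 0 < ρ y x := hρ.2.1 (hE.1.symm hxy)
  have hpz : 0 < ρ z x := hρ.2.1 (hE.1.symm hxz)
  have hp : 0 < ρ y z := hρ.2.1 hyz'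
  have hmul : ρ y x = ρ y z * ρ z x := hρ.2.2 hyz' (hE.1.symm hxz)
  have hlog : Real.log (ρ y x) = Real.log (ρ y z) + Real.log (ρ z x) := by
    rw [hmul, Real.log_mul hp.ne' hpz.ne']
  have habs := Int.abs_sub_lt_one_of_floor_eq_floor hfl
  rw [← sub_div, abs_div, abs_of_pos hδ, div_lt_one hδ, hlog, add_sub_cancel_right] at habs
  have : Real.log (ρ y z) ∈ Metric.ball (0:ℝ) δ := by
    simpa [Real.dist_eq] using habs
  have := hball this
  simpa [Real.exp_log hp] using this

/-- Lusin–Novikov for smooth cocycles. -/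
lemma exists_enum [MeasurableSpace X] [StandardBorelSpace X] {E : X → X → Prop} (hE : IsCBER E)
    {ρ : X → X → ℝ} (hρ : IsCocycle E ρ) (hsm : Smooth E ρ) :
    ∃ h : ℕ × ℤ → X → X, (∀ i, Measurable (h i)) ∧ (∀ i x, E x (h i x)) ∧
      ∀ x y, E x y → ∃ i, h i x = y := by
  obtain ⟨c, δ, hc, hδ, hlac⟩ := exists_lacunary hE hρ hsm
  have key : ∀ i : ℕ × ℤ, ∃ f : X → X, Measurable f ∧ (∀ x, E x (f x)) ∧
      ∀ x y, E x y → c y = i.1 → ⌊Real.log (ρ y x) / δ⌋ = i.2 → f x = y := by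
    intro i
    obtain ⟨f, hf, -, hf1, hf2⟩ := unif_subsingleton
      (fun x y => E x y ∧ c y = i.1 ∧ ⌊Real.log (ρ y x) / δ⌋ = i.2) (by
        refine hE.2.1.inter (MeasurableSet.inter ?_ ?_)
        · exact (hc.comp measurable_snd) (measurableSet_singleton i.1)
        · have hm : Measurable (fun p : X × X => ⌊Real.log (ρ p.2 p.1) / δ⌋) := by
            refine Int.measurable_floor.comp (Measurable.div_const ?_ δ)
            exact Real.measurable_log.comp (hρ.1.comp measurable_swap)
          exact hm (measurableSet_singleton i.2))
      (by
        rintro x y z ⟨h1, h2, h3⟩ ⟨h4, h5, h6⟩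
        exact hlac x y z h1 h4 (h2.trans h5.symm) (h3.trans h6.symm))
    refine ⟨f, hf, ?_, ?_⟩
    · intro x
      by_cases hx : ∃ y, E x y ∧ c y = i.1 ∧ ⌊Real.log (ρ y x) / δ⌋ = i.2
      · exact (hf1 x hx).1
      · rw [hf2 x hx]; exact hE.1.refl x
    · intro x y h1 h2 h3
      obtain ⟨h4, h5, h6⟩ := hf1 x ⟨y, h1, h2, h3⟩
      exact hlac x _ _ h4 h1 (h5.trans h2.symm) (h6.trans h3.symm)
  choose h h1 h2 h3 using key
  exact ⟨h, h1, h2, fun x y hxy => ⟨(c y, _), h3 (c y, _) x y hxy rfl rfl⟩⟩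

/-- Feldman–Moore for smooth cocycles. -/
lemma exists_involutions [MeasurableSpace X] [StandardBorelSpace X] {E : X → X → Prop}
    (hE : IsCBER E) {ρ : X → X → ℝ} (hρ : IsCocycle E ρ) (hsm : Smooth E ρ) :
    ∃ T : ℕ → X ≃ᵐ X, (∀ n x, T n (T n x) = x) ∧ (∀ n x, E x (T n x)) ∧
      ∀ x y, E x y → ∃ n, T n x = y := by
  classical
  obtain ⟨h, hm, hEh, hcov⟩ := exists_enum hE hρ hsm
  obtain ⟨e, he⟩ := MeasureTheory.exists_measurableEmbedding_real X
  have key : ∀ a : (ℕ × ℤ) × (ℕ × ℤ) × ℚ, ∃ f : X ≃ᵐ X, (∀ x, f (f x) = x) ∧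
      (∀ x, E x (f x)) ∧
      (∀ x, h a.2.1 (h a.1 x) = x → e x < a.2.2 → (a.2.2 : ℝ) ≤ e (h a.1 x) → f x = h a.1 x) ∧
      (∀ x, h a.1 (h a.2.1 x) = x → e (h a.2.1 x) < a.2.2 → (a.2.2 : ℝ) ≤ e x →
        f x = h a.2.1 x) := by
    rintro ⟨i, j, q⟩
    simp only
    set A : Set X := {x | h j (h i x) = x ∧ e x < q ∧ (q : ℝ) ≤ e (h i x)} with hA
    set A' : Set X := {x | h i (h j x) = x ∧ e (h j x) < q ∧ (q : ℝ) ≤ e x} with hA'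
    have mA : MeasurableSet A := by
      refine (measurableSet_eq_fun ((hm j).comp (hm i)) measurable_id).inter
        ((measurableSet_lt he.measurable measurable_const).inter
        (measurableSet_le measurable_const (he.measurable.comp (hm i))))
    have mA' : MeasurableSet A' := by
      refine (measurableSet_eq_fun ((hm i).comp (hm j)) measurable_id).inter
        ((measurableSet_lt (he.measurable.comp (hm j)) measurable_const).inter
        (measurableSet_le measurable_const he.measurable))
    let f : X → X := fun x => if x ∈ A then h i x else if x ∈ A' then h j x else x
    have fA : ∀ x ∈ A, f x = h i x := fun x hx => by simp only [f, hx, if_true]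
    have fA' : ∀ x ∈ A', f x = h j x := fun x hx => by
      have : x ∉ A := fun hx' => absurd hx'.2.1 (not_lt.2 hx.2.2)
      simp only [f, hx, this, if_true, if_false]
    have fid : ∀ x, x ∉ A → x ∉ A' → f x = x := fun x h1 h2 => by
      simp only [f, h1, h2, if_false]
    have hff : ∀ x, f (f x) = x := by
      intro x
      by_cases h1 : x ∈ A
      · rw [fA x h1, fA', h1.1]
        exact ⟨by rw [h1.1], by rw [h1.1]; exact h1.2.1, h1.2.2⟩
      · by_cases h2 : x ∈ A'
        · rw [fA' x h2, fA, h2.1]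
          exact ⟨by rw [h2.1], h2.2.1, by rw [h2.1]; exact h2.2.2⟩
        · rw [fid x h1 h2, fid x h1 h2]
    have fm : Measurable f := Measurable.ite mA (hm i) (Measurable.ite mA' (hm j) measurable_id)
    refine ⟨⟨⟨f, f, hff, hff⟩, fm, fm⟩, hff, ?_, ?_, ?_⟩
    · intro x
      change E x (f x)
      by_cases h1 : x ∈ A
      · rw [fA x h1]; exact hEh i x
      · by_cases h2 : x ∈ A'
        · rw [fA' x h2]; exact hEh j x
        · rw [fid x h1 h2]; exact hE.1.refl x
    · intro x h1 h2 h3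
      exact fA x ⟨h1, h2, h3⟩
    · intro x h1 h2 h3
      exact fA' x ⟨h1, h2, h3⟩
  choose f f1 f2 f3 f4 using key
  let g : Option ((ℕ × ℤ) × (ℕ × ℤ) × ℚ) → X ≃ᵐ X :=
    fun a => Option.elim a (MeasurableEquiv.refl X) f
  obtain ⟨s, hs⟩ := exists_surjective_nat (Option ((ℕ × ℤ) × (ℕ × ℤ) × ℚ))
  have g1 : ∀ a x, g a (g a x) = x := by
    rintro (_ | a) x
    · rfl
    · exact f1 a x
  have g2 : ∀ a x, E x (g a x) := by
    rintro (_ | a) x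
    · exact hE.1.refl x
    · exact f2 a x
  refine ⟨fun n => g (s n), fun n x => g1 _ x, fun n x => g2 _ x, ?_⟩
  intro x y hxy
  suffices ∃ a, g a x = y by
    obtain ⟨a, ha⟩ := this
    obtain ⟨n, rfl⟩ := hs a
    exact ⟨n, ha⟩
  rcases lt_trichotomy (e x) (e y) with hlt | heq | hlt
  · obtain ⟨q, hq1, hq2⟩ := exists_rat_btwn hlt
    obtain ⟨i, hi⟩ := hcov x y hxy
    obtain ⟨j, hj⟩ := hcov y x (hE.1.symm hxy)
    refine ⟨some (i, j, q), ?_⟩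
    have := f3 (i, j, q) x (by simp only [hi, hj]) hq1 (by simp only [hi]; exact hq2.le)
    exact this.trans hi
  · exact ⟨none, he.injective heq⟩
  · obtain ⟨q, hq1, hq2⟩ := exists_rat_btwn hlt
    obtain ⟨i, hi⟩ := hcov y x (hE.1.symm hxy)
    obtain ⟨j, hj⟩ := hcov x y hxy
    refine ⟨some (i, j, q), ?_⟩
    have := f4 (i, j, q) x (by simp only [hi, hj]) (by simp only [hj]; exact hq1) hq2.le
    exact this.trans hj

/-- A sequence of Borel involutions whose graphs cover `E`. -/
structure FMSys [MeasurableSpace X] (E : X → X → Prop) (T : ℕ → X ≃ᵐ X) : Prop where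
  invol : ∀ n x, T n (T n x) = x
  graph : ∀ n x, E x (T n x)
  cover : ∀ x y, E x y → ∃ n, T n x = y

/-- The points at which `T n x` has not been enumerated before. -/
def firstSet [MeasurableSpace X] (T : ℕ → X ≃ᵐ X) (n : ℕ) : Set X :=
  {x | ∀ m < n, T m x ≠ T n x}

lemma measurableSet_firstSet [MeasurableSpace X] [StandardBorelSpace X] (T : ℕ → X ≃ᵐ X)
    (n : ℕ) : MeasurableSet (firstSet T n) := by
  have : firstSet T n = ⋂ m, ⋂ (_ : m < n), {x | T m x = T n x}ᶜ := by
    ext x; simp [firstSet]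
  rw [this]
  exact MeasurableSet.iInter fun m => MeasurableSet.iInter fun _ =>
    (measurableSet_eq_fun (T m).measurable (T n).measurable).compl

lemma firstSet_invol [MeasurableSpace X] {E : X → X → Prop} {T : ℕ → X ≃ᵐ X}
    (hT : FMSys E T) (n : ℕ) (x : X) : T n x ∈ firstSet T n ↔ x ∈ firstSet T n := by
  have key : ∀ x, x ∈ firstSet T n → T n x ∈ firstSet T n := by
    intro x hx m hm h
    rw [hT.invol] at h
    apply hx m hm
    rw [← h, hT.invol, h]
  refine ⟨fun h => ?_, key x⟩
  simpa [hT.invol] using key _ h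

lemma class_sum [MeasurableSpace X] {E : X → X → Prop} {T : ℕ → X ≃ᵐ X}
    (hT : FMSys E T) (G : X → X → ℝ≥0∞) (x : X) :
    ∑' y : {y | E x y}, G x y
      = ∑' n, (firstSet T n).indicator (fun x => G x (T n x)) x := by
  classical
  have h1 : ∑' n, (firstSet T n).indicator (fun x => G x (T n x)) x
      = ∑' n : {n | x ∈ firstSet T n}, G x (T n x) := by
    rw [tsum_subtype {n | x ∈ firstSet T n} (fun n => G x (T n x))]
    rfl
  rw [h1]
  let u : {n | x ∈ firstSet T n} → {y | E x y} := fun n => ⟨T n x, hT.graph n x⟩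
  have hu : Function.Bijective u := by
    constructor
    · rintro ⟨n, hn⟩ ⟨m, hm⟩ h
      have h' : T n x = T m x := congrArg Subtype.val h
      rcases lt_trichotomy n m with hlt | heq | hlt
      · exact absurd h' (hm n hlt)
      · exact Subtype.ext heq
      · exact absurd h'.symm (hn m hlt)
    · rintro ⟨y, hy⟩
      have hex := hT.cover x y hy
      refine ⟨⟨Nat.find hex, ?_⟩, Subtype.ext (Nat.find_spec hex)⟩
      intro m hm h
      exact Nat.find_min hex hm (h.trans (Nat.find_spec hex))
  exact ((Equiv.ofBijective u hu).tsum_eq (fun y : {y | E x y} => G x y)).symm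

lemma eSize_eq_class [MeasurableSpace X] {E : X → X → Prop} {ρ : X → X → ℝ} {Y : Set X} {x : X}
    (hY : ∀ y ∈ Y, E x y) (z : X) :
    eSize ρ Y z = ∑' y : {y | E x y}, Y.indicator (fun y => ENNReal.ofReal (ρ y z)) y := by
  rw [tsum_subtype {y | E x y} (Y.indicator (fun y => ENNReal.ofReal (ρ y z)))]
  rw [eSize, tsum_subtype Y (fun y => ENNReal.ofReal (ρ y z)), indicator_indicator]
  have : {y | E x y} ∩ Y = Y := inter_eq_right.2 hY
  rw [this]

lemma change_var [MeasurableSpace X] {E : X → X → Prop} (hE : IsCBER E)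
    {ρ : X → X → ℝ} (hρ : IsCocycle E ρ) {μ : Measure X} (hμ : IsInvariant E ρ μ)
    (T : X ≃ᵐ X) (hT : ∀ x, E x (T x)) {G : X → ℝ≥0∞} (hG : Measurable G) :
    ∫⁻ x, G x ∂μ = ∫⁻ x, ENNReal.ofReal (ρ (T x) x) * G (T x) ∂μ := by
  have hm : Measurable fun x => ENNReal.ofReal (ρ (T x) x) :=
    (hρ.1.comp (T.measurable.prodMk measurable_id)).ennreal_ofReal
  have h : μ.map T.symm = μ.withDensity (fun x => ENNReal.ofReal (ρ (T x) x)) := by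
    ext B hB
    rw [withDensity_apply _ hB, Measure.map_apply T.symm.measurable hB,
      ← hμ T (fun x => hE.1.symm (hT x)) B hB, MeasurableEquiv.image_eq_preimage_symm]
  have hGT : Measurable fun x => G (T x) := hG.comp T.measurable
  have h2 : ∫⁻ x, G (T x) ∂(μ.map T.symm) = ∫⁻ x, G x ∂μ := by
    rw [lintegral_map hGT T.symm.measurable]
    simp
  rw [← h2, h, lintegral_withDensity_eq_lintegral_mul _ hm hGT]
  rfl

lemma mass_transport [MeasurableSpace X] [StandardBorelSpace X] {E : X → X → Prop}
    (hE : IsCBER E) {ρ : X → X → ℝ} (hρ : IsCocycle E ρ) {T : ℕ → X ≃ᵐ X} (hT : FMSys E T)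
    {μ : Measure X} (hμ : IsInvariant E ρ μ) (f : X → X → ℝ≥0∞)
    (hf : ∀ n, Measurable fun x => f x (T n x)) :
    ∫⁻ x, ∑' y : {y | E x y}, f x y ∂μ
      = ∫⁻ x, ∑' y : {y | E x y}, f y x * ENNReal.ofReal (ρ y x) ∂μ := by
  have hf' : ∀ n, Measurable fun x => f (T n x) x := by
    intro n
    have := (hf n).comp (T n).measurable
    simpa [Function.comp_def, hT.invol] using this
  have hr : ∀ n, Measurable fun x => ENNReal.ofReal (ρ (T n x) x) := fun n =>
    (hρ.1.comp ((T n).measurable.prodMk measurable_id)).ennreal_ofReal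
  have hfr : ∀ n, Measurable fun x => f (T n x) x * ENNReal.ofReal (ρ (T n x) x) := fun n =>
    (hf' n).mul (hr n)
  have hF := measurableSet_firstSet T
  simp_rw [class_sum hT f, class_sum hT (fun x y => f y x * ENNReal.ofReal (ρ y x))]
  rw [lintegral_tsum (fun n => ((hf n).indicator (hF n)).aemeasurable),
    lintegral_tsum (fun n => ((hfr n).indicator (hF n)).aemeasurable)]
  congr 1
  ext n
  rw [change_var hE hρ hμ (T n) (hT.graph n)
    ((hfr n).indicator (hF n))]
  refine lintegral_congr fun x => ?_
  by_cases hx : x ∈ firstSet T n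
  · rw [indicator_of_mem hx, indicator_of_mem ((firstSet_invol hT n x).2 hx)]
    simp only [hT.invol]
    have : ENNReal.ofReal (ρ (T n x) x) * ENNReal.ofReal (ρ x (T n x)) = 1 := by
      rw [← ENNReal.ofReal_mul (hρ.2.1 (hE.1.symm (hT.graph n x))).le,
        cocycle_mul_symm hE hρ (hE.1.symm (hT.graph n x)), ENNReal.ofReal_one]
    rw [mul_left_comm, this, mul_one]
  · rw [indicator_of_notMem hx, indicator_of_notMem (fun h => hx ((firstSet_invol hT n x).1 h)),
      mul_zero]

/-- Borel selection on `E`. -/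
lemma exists_selector [MeasurableSpace X] {E : X → X → Prop} {T : ℕ → X ≃ᵐ X}
    (hT : FMSys E T) (P : X → X → Prop) (hPE : ∀ x y, P x y → E x y)
    (hP : ∀ n, MeasurableSet {x | P x (T n x)}) :
    ∃ f : X → X, Measurable f ∧ (∀ x y, P x y → P x (f x)) := by
  classical
  have hD : MeasurableSet {x | ∃ n, P x (T n x)} := by
    have : {x | ∃ n, P x (T n x)} = ⋃ n, {x | P x (T n x)} := by ext; simp
    rw [this]; exact MeasurableSet.iUnion hP
  have hex : ∀ x, ∃ n, P x (T n x) ∨ ¬ ∃ n, P x (T n x) := by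
    intro x
    by_cases h : ∃ n, P x (T n x)
    · exact ⟨h.choose, Or.inl h.choose_spec⟩
    · exact ⟨0, Or.inr h⟩
  have hN : Measurable fun x => Nat.find (hex x) :=
    measurable_find hex fun k => (hP k).union hD.compl
  refine ⟨fun x => T (Nat.find (hex x)) x, ?_, ?_⟩
  · have h1 : Measurable (fun p : ℕ × X => T p.1 p.2) :=
      measurable_from_prod_countable_right fun n => (T n).measurable
    exact h1.comp (hN.prodMk measurable_id)
  · intro x y hxy
    obtain ⟨n, rfl⟩ := hT.cover x y (hPE x y hxy)
    rcases Nat.find_spec (hex x) with h | h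
    · exact h
    · exact absurd ⟨n, hxy⟩ h

/-- Existence over a class is Borel. -/
lemma measurableSet_exists [MeasurableSpace X] {E : X → X → Prop} {T : ℕ → X ≃ᵐ X}
    (hT : FMSys E T) (P : X → X → Prop)
    (hP : ∀ n, MeasurableSet {x | P x (T n x)}) : MeasurableSet {x | ∃ y, E x y ∧ P x y} := by
  have : {x | ∃ y, E x y ∧ P x y} = ⋃ n, {x | P x (T n x)} := by
    ext x
    simp only [mem_ofPred_eq, mem_iUnion]
    constructor
    · rintro ⟨y, h1, h2⟩
      obtain ⟨n, rfl⟩ := hT.cover x y h1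
      exact ⟨n, h2⟩
    · rintro ⟨n, h⟩
      exact ⟨_, hT.graph n x, h⟩
  rw [this]; exact MeasurableSet.iUnion hP

/-- Universal quantification over a class is Borel. -/
lemma measurableSet_forall [MeasurableSpace X] {E : X → X → Prop} {T : ℕ → X ≃ᵐ X}
    (hT : FMSys E T) (P : X → X → Prop)
    (hP : ∀ n, MeasurableSet {x | P x (T n x)}) : MeasurableSet {x | ∀ y, E x y → P x y} := by
  have := (measurableSet_exists hT (fun x y => ¬ P x y) (fun n => (hP n).compl)).compl
  convert this using 1
  ext x; simp

lemma eSize_ne_top {ρ : X → X → ℝ} {Y : Set X} (hY : Y.Finite) (z : X) : eSize ρ Y z ≠ ⊤ := by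
  have := hY.fintype
  rw [eSize, tsum_fintype]
  exact ENNReal.sum_ne_top.2 fun y _ => ENNReal.ofReal_ne_top

lemma eSize_ne_zero {ρ : X → X → ℝ} {Y : Set X} {y z : X} (hy : y ∈ Y) (h : 0 < ρ y z) :
    eSize ρ Y z ≠ 0 := by
  rw [eSize]
  have h1 := ENNReal.le_tsum (f := fun y : Y => ENNReal.ofReal (ρ y z)) ⟨y, hy⟩
  have h2 : 0 < ENNReal.ofReal (ρ y z) := ENNReal.ofReal_pos.2 h
  exact (h2.trans_le h1).ne'

lemma eSize_base [MeasurableSpace X] {E : X → X → Prop}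
    {ρ : X → X → ℝ} (hρ : IsCocycle E ρ) {Y : Set X} {x z : X} (hY : ∀ y ∈ Y, E y x)
    (hxz : E x z) : eSize ρ Y z = eSize ρ Y x * ENNReal.ofReal (ρ x z) := by
  rw [eSize, eSize, ← ENNReal.tsum_mul_right]
  congr 1
  ext y
  rw [hρ.2.2 (hY y y.2) hxz, ENNReal.ofReal_mul (hρ.2.1 (hY y y.2)).le]

/-- Finite Borel equivalence relations have Borel selectors. -/
lemma exists_fin_selector [MeasurableSpace X] [StandardBorelSpace X] {E F : X → X → Prop}
    {T : ℕ → X ≃ᵐ X} (hT : FMSys E T) (hF : IsFinSubequiv E F) :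
    ∃ t : X → X, Measurable t ∧ (∀ x, F x (t x)) ∧ ∀ x y, F x y → t x = t y := by
  obtain ⟨e, he⟩ := MeasureTheory.exists_measurableEmbedding_real X
  have hFn : ∀ n, MeasurableSet {x | F x (T n x)} := fun n =>
    (measurable_id.prodMk (T n).measurable) hF.2.1
  obtain ⟨t, ht, hsel⟩ := exists_selector hT
    (fun x y => F x y ∧ ∀ z, E x z → (F x z → e y ≤ e z)) (fun x y h => hF.2.2.1 h.1) (by
      intro n
      refine (hFn n).inter (measurableSet_forall hT (fun x z => F x z → e (T n x) ≤ e z) ?_)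
      intro m
      have : {x | F x (T m x) → e (T n x) ≤ e (T m x)}
          = {x | F x (T m x)}ᶜ ∪ {x | e (T n x) ≤ e (T m x)} := by
        ext x; simp [imp_iff_not_or]
      rw [this]
      exact (hFn m).compl.union (measurableSet_le (he.measurable.comp (T n).measurable)
        (he.measurable.comp (T m).measurable)))
  have hspec : ∀ x, F x (t x) ∧ ∀ z, E x z → (F x z → e (t x) ≤ e z) := by
    intro x
    obtain ⟨y, hy, hmin⟩ := Set.exists_min_image {y | F x y} e (hF.2.2.2 x) ⟨x, hF.1.refl x⟩
    exact hsel x y ⟨hy, fun z _ hz => hmin z hz⟩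
  refine ⟨t, ht, fun x => (hspec x).1, ?_⟩
  intro x y hxy
  apply he.injective
  have h1 : F x (t y) := hF.1.trans hxy (hspec y).1
  have h2 : F y (t x) := hF.1.trans (hF.1.symm hxy) (hspec x).1
  exact le_antisymm ((hspec x).2 _ (hF.2.2.1 h1) h1) ((hspec y).2 _ (hF.2.2.1 h2) h2)

lemma not_both [MeasurableSpace X] [StandardBorelSpace X]
    {E : X → X → Prop} (hE : IsCBER E) {ρ : X → X → ℝ} (hρ : IsCocycle E ρ)
    {T : ℕ → X ≃ᵐ X} (hT : FMSys E T) (F : X → X → Prop) (hF : Equivalence F)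
    (hfin : IsFinSubequiv E F)
    (φ : Quotient (Setoid.mk F hF) → Quotient (Setoid.mk F hF)) (hφ : Measurable φ)
    (hcomp : QuotCompressionOn E ρ Set.univ (Setoid.mk F hF) φ)
    (μ : Measure X) (hprob : IsProbabilityMeasure μ) (hμ : IsInvariant E ρ μ) : False := by
  classical
  obtain ⟨t, ht, ht1, ht2⟩ := exists_fin_selector hT hfin
  let mk : X → Quotient (Setoid.mk F hF) := Quotient.mk (Setoid.mk F hF)
  have hmk : Measurable mk := measurable_quotient_mk''
  have mk_eq : ∀ x y, mk x = mk y ↔ F x y := fun x y => Quotient.eq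
  let tb : Quotient (Setoid.mk F hF) → X := Quotient.lift t ht2
  have htb : Measurable tb := measurable_from_quotient.2 ht
  have tb_inj : Function.Injective tb := by
    intro a b
    induction a using Quotient.inductionOn with | _ x
    induction b using Quotient.inductionOn with | _ y
    intro (h : t x = t y)
    refine (mk_eq x y).2 (hF.trans (ht1 x) ?_)
    rw [h]; exact hF.symm (ht1 y)
  let I : X → X → Prop := fun x y => φ (mk x) = mk y
  have hIE : ∀ x y, I x y → E x y := fun x y h => (hcomp.1 (mem_univ x) y h).1
  have hIm : ∀ n, MeasurableSet {x | I x (T n x)} := by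
    intro n
    have : {x | I x (T n x)} = {x | tb (φ (mk x)) = t (T n x)} := by
      ext x
      exact tb_inj.eq_iff.symm
    rw [this]
    exact measurableSet_eq_fun (htb.comp (hφ.comp hmk)) (ht.comp (T n).measurable)
  have hIm' : ∀ n, MeasurableSet {x | I (T n x) x} := by
    intro n
    have := (T n).measurable (hIm n)
    simpa [hT.invol] using this
  have hr : ∀ n, Measurable fun x => ENNReal.ofReal (ρ (T n x) x) := fun n =>
    (hρ.1.comp ((T n).measurable.prodMk measurable_id)).ennreal_ofReal
  let v : X → ℝ≥0∞ := fun x => eSize ρ {y | I x y} x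
  have hv : Measurable v := by
    have : v = fun x => ∑' n, (firstSet T n).indicator
        (fun x => ({y | I x y}).indicator (fun y => ENNReal.ofReal (ρ y x)) (T n x)) x := by
      ext x
      rw [← class_sum hT (fun x y => ({y | I x y}).indicator (fun y => ENNReal.ofReal (ρ y x)) y)]
      exact eSize_eq_class (fun y hy => hIE x y hy) x
    rw [this]
    refine Measurable.tsum fun n => Measurable.indicator ?_ (measurableSet_firstSet T n)
    exact (hr n).indicator (hIm n)
  have hvI : ∀ x y, I x y → v x = eSize ρ {z | F z y} x := by
    intro x y hxy
    have : {z | I x z} = {z | F z y} := by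
      ext z
      simp only [mem_ofPred_eq, I]
      rw [show φ (mk x) = mk y from hxy, mk_eq]
      exact ⟨fun h => hF.symm h, fun h => hF.symm h⟩
    simp only [v, this]
  have hfinc : ∀ y, {z | F z y}.Finite := fun y =>
    (hfin.2.2.2 y).subset fun z hz => hF.symm hz
  have hIex : ∀ x, ∃ y, I x y := by
    intro x
    obtain ⟨y, hy⟩ := Quotient.exists_rep (φ (mk x))
    exact ⟨y, hy.symm⟩
  have hv0 : ∀ x, v x ≠ 0 := by
    intro x
    obtain ⟨y, hy⟩ := hIex x
    exact eSize_ne_zero (y := y) hy (hρ.2.1 (hE.1.symm (hIE x y hy)))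
  have hvt : ∀ x, v x ≠ ⊤ := by
    intro x
    obtain ⟨y, hy⟩ := hIex x
    rw [hvI x y hy]
    exact eSize_ne_top (hfinc y) x
  let f : X → X → ℝ≥0∞ := fun x y =>
    ({y | I x y}).indicator (fun y => ENNReal.ofReal (ρ y x)) y * (v x)⁻¹
  have hf : ∀ n, Measurable fun x => f x (T n x) := fun n =>
    Measurable.mul ((hr n).indicator (hIm n)) hv.inv
  let r : X → ℝ≥0∞ := fun x => relSize ρ {y | y ∈ univ ∧ φ (mk y) = mk x} {y | F y x} x
  have hout : ∀ x, ∑' y : {y | E x y}, f x y = 1 := by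
    intro x
    simp only [f]
    rw [ENNReal.tsum_mul_right, ← eSize_eq_class (Y := {y | I x y}) (fun y hy => hIE x y hy) x]
    exact ENNReal.mul_inv_cancel (hv0 x) (hvt x)
  have hin : ∀ x, ∑' y : {y | E x y}, f y x * ENNReal.ofReal (ρ y x) = r x := by
    intro x
    simp only [r, relSize]
    rw [eSize_eq_class (E := E) (x := x) (Y := {y | y ∈ univ ∧ φ (mk y) = mk x})
      (fun y hy => hE.1.symm (hIE y x hy.2)) x, div_eq_mul_inv, ← ENNReal.tsum_mul_right]
    congr 1
    ext ⟨y, hy⟩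
    simp only [f]
    by_cases hI : I y x
    · rw [indicator_of_mem (show x ∈ {z | I y z} from hI),
        indicator_of_mem (show y ∈ {y | y ∈ univ ∧ φ (mk y) = mk x} from ⟨mem_univ y, hI⟩),
        hvI y x hI, eSize_base hρ (Y := {z | F z x}) (fun z hz => hfin.2.2.1 hz) hy]
      have hp : 0 < ρ x y := hρ.2.1 hy
      have h0 : ENNReal.ofReal (ρ x y) ≠ 0 := (ENNReal.ofReal_pos.2 hp).ne'
      rw [ENNReal.mul_inv (Or.inr ENNReal.ofReal_ne_top) (Or.inr h0)]
      rw [mul_comm (eSize ρ {z | F z x} x)⁻¹, ← mul_assoc,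
        ENNReal.mul_inv_cancel h0 ENNReal.ofReal_ne_top, one_mul, mul_comm]
    · rw [indicator_of_notMem (show x ∉ {z | I y z} from hI),
        indicator_of_notMem (show y ∉ {y | y ∈ univ ∧ φ (mk y) = mk x} from fun h => hI h.2)]
      simp
  have hf' : ∀ n, Measurable fun x => f (T n x) x := by
    intro n
    have := (hf n).comp (T n).measurable
    simpa [Function.comp_def, hT.invol] using this
  have hrm : Measurable r := by
    have : r = fun x => ∑' n, (firstSet T n).indicator
        (fun x => f (T n x) x * ENNReal.ofReal (ρ (T n x) x)) x := by
      ext x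
      rw [← hin x, class_sum hT (fun x y => f y x * ENNReal.ofReal (ρ y x))]
    rw [this]
    refine Measurable.tsum fun n => Measurable.indicator ?_ (measurableSet_firstSet T n)
    exact (hf' n).mul (hr n)
  have hint : ∫⁻ x, r x ∂μ = 1 := by
    have := mass_transport hE hρ hT hμ f hf
    simp_rw [hout, hin] at this
    rw [← this]; simp
  have hr1 : ∀ x, r x ≤ 1 := fun x => hcomp.2.1 (mem_univ x)
  have hsub : ∫⁻ x, (1 - r x) ∂μ = 0 := by
    rw [lintegral_sub hrm (by rw [hint]; simp) (Filter.Eventually.of_forall hr1), hint]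
    simp
  have hnull : μ {x | r x < 1} = 0 := by
    have h1 := (lintegral_eq_zero_iff (measurable_const.sub hrm)).1 hsub
    have h2 : ∀ᵐ x ∂μ, ¬ (r x < 1) := by
      filter_upwards [h1] with x hx hlt
      exact absurd (tsub_eq_zero_iff_le.1 hx) (not_le.2 hlt)
    have := ae_iff.1 h2
    simpa using this
  have hNm : MeasurableSet {x | r x < 1} := measurableSet_lt hrm measurable_const
  have hcov : (univ : Set X) ⊆ ⋃ n, T n '' {x | r x < 1} := by
    intro x _
    obtain ⟨y, -, hxy, hy⟩ := hcomp.2.2 (mem_univ x)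
    obtain ⟨n, rfl⟩ := hT.cover x y hxy
    exact mem_iUnion.2 ⟨n, T n x, hy, hT.invol n x⟩
  have hz : μ univ = 0 := by
    refine measure_mono_null hcov (measure_iUnion_null fun n => ?_)
    rw [hμ (T n) (fun x => hE.1.symm (hT.graph n x)) _ hNm]
    exact setLIntegral_measure_zero _ _ hnull
  rw [measure_univ] at hz
  exact one_ne_zero hz

/-- A class of finite `ρ`-size carries a `ρ`-invariant probability measure. -/
lemma measure_of_finite [MeasurableSpace X] [StandardBorelSpace X]
    {E : X → X → Prop} (hE : IsCBER E) {ρ : X → X → ℝ} (hρ : IsCocycle E ρ) (m : X)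
    (hm : eSize ρ {y | E m y} m ≠ ⊤) :
    ∃ μ : Measure X, IsProbabilityMeasure μ ∧ IsInvariant E ρ μ := by
  classical
  have : Countable {y | E m y} := (hE.2.2 m).to_subtype
  let w : X → ℝ≥0∞ := fun y => ENNReal.ofReal (ρ y m)
  let ν : Measure X := Measure.sum fun y : {y | E m y} => w y • Measure.dirac (y : X)
  have hν : ∀ B, MeasurableSet B → ν B = ∑' y : {y | E m y}, B.indicator w y := by
    intro B hB
    rw [Measure.sum_apply _ hB]
    congr 1
    ext y
    rw [Measure.smul_apply, Measure.dirac_apply' _ hB]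
    by_cases h : (y : X) ∈ B <;> simp [h]
  have hν1 : ν univ = eSize ρ {y | E m y} m := by
    rw [hν _ MeasurableSet.univ]; simp [eSize, w]
  have h0 : eSize ρ {y | E m y} m ≠ 0 :=
    eSize_ne_zero (y := m) (hE.1.refl m) (hρ.2.1 (hE.1.refl m))
  refine ⟨(eSize ρ {y | E m y} m)⁻¹ • ν, ⟨?_⟩, ?_⟩
  · rw [Measure.smul_apply, hν1, smul_eq_mul, ENNReal.inv_mul_cancel h0 hm]
  · intro T hT B hB
    rw [Measure.smul_apply, Measure.restrict_smul, lintegral_smul_measure]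
    congr 1
    have hmT : Measurable fun x => ENNReal.ofReal (ρ (T x) x) :=
      (hρ.1.comp (T.measurable.prodMk measurable_id)).ennreal_ofReal
    have hTB : MeasurableSet (T '' B) := T.measurableEmbedding.measurableSet_image.2 hB
    rw [hν _ hTB, ← lintegral_indicator hB, lintegral_sum_measure]
    let u : {y | E m y} ≃ {y | E m y} :=
      { toFun := fun y => ⟨T y, hE.1.trans y.2 (hE.1.symm (hT y))⟩
        invFun := fun y => ⟨T.symm y, hE.1.trans y.2 (by
          have := hT (T.symm y); simpa using this)⟩
        left_inv := fun y => by simp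
        right_inv := fun y => by simp }
    rw [← u.tsum_eq]
    congr 1
    ext ⟨y, hy⟩
    rw [lintegral_smul_measure, lintegral_dirac' _ (hmT.indicator hB)]
    change (T '' B).indicator w (T y) = _
    by_cases h : y ∈ B
    · rw [indicator_of_mem (mem_image_of_mem T h), indicator_of_mem h]
      simp only [w, smul_eq_mul]
      rw [hρ.2.2 (hT y) (hE.1.symm hy), ENNReal.ofReal_mul (hρ.2.1 (hT y)).le, mul_comm]
    · rw [indicator_of_notMem h, indicator_of_notMem]
      · simp
      · rintro ⟨z, hz, hzy⟩
        exact h (T.injective hzy ▸ hz)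

lemma eSize_mono {ρ : X → X → ℝ} {Y Z : Set X} (h : Y ⊆ Z) (z : X) :
    eSize ρ Y z ≤ eSize ρ Z z :=
  ENNReal.tsum_mono_subtype (fun y => ENNReal.ofReal (ρ y z)) h

lemma eSize_union {ρ : X → X → ℝ} {Y Z : Set X} (h : Disjoint Y Z) (z : X) :
    eSize ρ (Y ∪ Z) z = eSize ρ Y z + eSize ρ Z z :=
  ENNReal.summable.tsum_union_disjoint (f := fun y => ENNReal.ofReal (ρ y z)) h
    ENNReal.summable

lemma eSize_empty {ρ : X → X → ℝ} (z : X) : eSize ρ ∅ z = 0 := by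
  simp [eSize]

lemma eSize_singleton {ρ : X → X → ℝ} (y z : X) :
    eSize ρ {y} z = ENNReal.ofReal (ρ y z) := by
  rw [eSize, tsum_singleton y (fun y => ENNReal.ofReal (ρ y z))]

/-- Borel thresholds at which partial sums double. -/
lemma exists_thresholds [MeasurableSpace X] (S : ℕ → X → ℝ≥0∞) (hS : ∀ n, Measurable (S n))
    (hfin : ∀ n x, S n x ≠ ⊤) (hunb : ∀ x t, t ≠ ⊤ → ∃ n, t ≤ S n x) :
    ∃ N : ℕ → X → ℕ, (∀ k, Measurable (N k)) ∧ (∀ x, 1 ≤ S (N 0 x) x) ∧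
      ∀ k x, 2 * S (N k x) x ≤ S (N (k + 1) x) x := by
  classical
  have step : ∀ t : X → ℝ≥0∞, Measurable t → (∀ x, t x ≠ ⊤) →
      ∃ f : X → ℕ, Measurable f ∧ ∀ x, t x ≤ S (f x) x := by
    intro t ht htt
    have hex : ∀ x, ∃ n, t x ≤ S n x := fun x => hunb x _ (htt x)
    exact ⟨fun x => Nat.find (hex x), measurable_find hex fun k => measurableSet_le ht (hS k),
      fun x => Nat.find_spec (hex x)⟩
  have hcomp : ∀ f : X → ℕ, Measurable f → Measurable fun x => S (f x) x := by
    intro f hf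
    have h1 : Measurable (fun p : ℕ × X => S p.1 p.2) :=
      measurable_from_prod_countable_right fun n => hS n
    exact h1.comp (hf.prodMk measurable_id)
  have step2 : ∀ f : {f : X → ℕ // Measurable f}, ∃ g : {f : X → ℕ // Measurable f},
      ∀ x, 2 * S (f.1 x) x ≤ S (g.1 x) x := by
    rintro ⟨f, hf⟩
    obtain ⟨g, hg, hg'⟩ := step (fun x => 2 * S (f x) x) ((hcomp f hf).const_mul 2)
      (fun x => ENNReal.mul_ne_top (by simp) (hfin _ _))
    exact ⟨⟨g, hg⟩, hg'⟩
  obtain ⟨f0, hf0, hf0'⟩ := step (fun _ => 1) measurable_const (by simp)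
  choose nx hnx using step2
  let N : ℕ → {f : X → ℕ // Measurable f} := fun k => Nat.rec ⟨f0, hf0⟩ (fun _ f => nx f) k
  exact ⟨fun k => (N k).1, fun k => (N k).2, hf0', fun k x => hnx (N k) x⟩

/-- Borel partition of the classes of infinite size into finite blocks of nondecreasing size. -/
lemma exists_blocks [MeasurableSpace X] [StandardBorelSpace X]
    {E : X → X → Prop} (hE : IsCBER E) {ρ : X → X → ℝ} (hρ : IsCocycle E ρ)
    {T : ℕ → X ≃ᵐ X} (hT : FMSys E T) (B M : Set X) (hM : MeasurableSet M)
    (hBE : ∀ x y, E x y → x ∈ B → y ∈ B)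
    (s : X → X) (hs : Measurable s) (hsM : ∀ x ∈ B, s x ∈ M) (hsE : ∀ x ∈ B, E x (s x))
    (hsc : ∀ x ∈ B, ∀ y, E x y → s x = s y) (hMB : M ⊆ B) (hsm : ∀ m ∈ M, s m = m)
    (code : X → ℕ) (hcode : Measurable code)
    (hinj : ∀ x ∈ B, ∀ y, E x y → code x = code y → x = y)
    (hinf : ∀ m ∈ M, eSize ρ {y | E m y} m = ⊤) :
    ∃ (block : X → ℕ) (g : X → X), Measurable block ∧ Measurable g ∧
      (∀ x ∈ B, E x (g x) ∧ block (g x) = block x + 1) ∧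
      (∀ x ∈ B, ∀ k, {y | E x y ∧ block y = k}.Finite) ∧
      (∀ x ∈ B, ∀ k, eSize ρ {y | E x y ∧ block y = k} x
        ≤ eSize ρ {y | E x y ∧ block y = k + 1} x) ∧
      (∀ x ∈ B, ∃ y, E x y ∧ block y = 0) := by
  classical
  let S : ℕ → X → ℝ≥0∞ := fun n m =>
    if m ∈ M then eSize ρ {y | E m y ∧ code y < n} m else n
  have hSM : ∀ n, ∀ m ∈ M, S n m = eSize ρ {y | E m y ∧ code y < n} m := fun n m hm => by
    simp only [S, hm, if_true]
  have hcfin : ∀ m ∈ B, ∀ n, {y | E m y ∧ code y < n}.Finite := by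
    intro m hm n
    refine Set.Finite.of_injOn (f := code) (t := Set.Iio n) (fun y hy => hy.2) ?_
      (Set.finite_Iio n)
    intro y hy z hz h
    exact hinj y (hBE m y hy.1 hm) z (hE.1.trans (hE.1.symm hy.1) hz.1) h
  have hr : ∀ n, Measurable fun x => ENNReal.ofReal (ρ (T n x) x) := fun n =>
    (hρ.1.comp ((T n).measurable.prodMk measurable_id)).ennreal_ofReal
  have hSmeas : ∀ n, Measurable (S n) := by
    intro n
    refine Measurable.ite hM ?_ measurable_const
    have : (fun m => eSize ρ {y | E m y ∧ code y < n} m) = fun x => ∑' k,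
        (firstSet T k).indicator (fun x => ({y | E x y ∧ code y < n}).indicator
          (fun y => ENNReal.ofReal (ρ y x)) (T k x)) x := by
      ext x
      rw [← class_sum hT (fun x y => ({y | E x y ∧ code y < n}).indicator
          (fun y => ENNReal.ofReal (ρ y x)) y)]
      exact eSize_eq_class (fun y hy => hy.1) x
    rw [this]
    refine Measurable.tsum fun k => Measurable.indicator ?_ (measurableSet_firstSet T k)
    have hm : MeasurableSet {x | E x (T k x) ∧ code (T k x) < n} :=
      MeasurableSet.inter ((measurable_id.prodMk (T k).measurable) hE.2.1)
        (measurableSet_lt (hcode.comp (T k).measurable) measurable_const)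
    exact (hr k).indicator hm
  have hSfin : ∀ n x, S n x ≠ ⊤ := by
    intro n x
    by_cases hx : x ∈ M
    · rw [hSM n x hx]
      exact eSize_ne_top (hcfin x (hMB hx) n) x
    · simp only [S, hx, if_false]
      exact ENNReal.natCast_ne_top n
  have hSunb : ∀ x t, t ≠ ⊤ → ∃ n, t ≤ S n x := by
    intro x t ht
    by_cases hx : x ∈ M
    · have h1 := hinf x hx
      rw [eSize, ENNReal.tsum_eq_iSup_sum] at h1
      have h2 : t < ⨆ u : Finset {y | E x y}, ∑ y ∈ u, ENNReal.ofReal (ρ y x) := by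
        rw [h1]; exact lt_top_iff_ne_top.2 ht
      obtain ⟨u, hu⟩ := lt_iSup_iff.1 h2
      refine ⟨u.sup (fun y => code y) + 1, hu.le.trans ?_⟩
      rw [hSM _ x hx, eSize_eq_class (E := E) (x := x)
        (Y := {y | E x y ∧ code y < u.sup (fun y => code y) + 1}) (fun y hy => hy.1) x]
      refine le_trans (Finset.sum_le_sum fun y hy => ?_) (ENNReal.sum_le_tsum u)
      rw [indicator_of_mem]
      exact ⟨y.2, Nat.lt_succ_of_le (Finset.le_sup (f := fun y : {y | E x y} => code y) hy)⟩
    · obtain ⟨n, hn⟩ := ENNReal.exists_nat_gt ht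
      refine ⟨n, ?_⟩
      simp only [S, hx, if_false]
      exact hn.le
  have hSmono : ∀ x, Monotone fun n => S n x := by
    intro x n n' hn
    by_cases hx : x ∈ M
    · simp only [hSM _ x hx]
      refine eSize_mono ?_ x
      rintro y ⟨h1, h2⟩
      exact ⟨h1, h2.trans_le hn⟩
    · simp only [S, hx, if_false]
      exact_mod_cast hn
  obtain ⟨N, hN, hN0, hN1⟩ := exists_thresholds S hSmeas hSfin hSunb
  have hNpos : ∀ k x, 1 ≤ S (N k x) x := by
    intro k x
    induction k with
    | zero => exact hN0 x
    | succ k ih =>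
      refine ih.trans (le_trans ?_ (hN1 k x))
      rw [two_mul]; exact le_self_add
  have hNlt : ∀ x, StrictMono fun k => N k x := by
    intro x
    refine strictMono_nat_of_lt_succ fun k => ?_
    by_contra hle
    have h1 : S (N (k + 1) x) x ≤ S (N k x) x := hSmono x (not_lt.1 hle)
    have h2 := (hN1 k x).trans h1
    rw [two_mul] at h2
    have h3 : S (N k x) x + S (N k x) x ≤ S (N k x) x + 0 := by simpa using h2
    have h4 := (ENNReal.add_le_add_iff_left (hSfin _ _)).1 h3
    have h5 := (hNpos k x).trans h4
    simp at h5
  have hex : ∀ x, ∃ k, code x < N k (s x) := fun x =>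
    ⟨code x + 1, (Nat.lt_succ_self _).trans_le ((hNlt (s x)).id_le _)⟩
  let block : X → ℕ := fun x => Nat.find (hex x)
  have hblock : Measurable block := measurable_find hex fun k =>
    measurableSet_lt hcode ((hN k).comp hs)
  have hbl : ∀ x k, block x ≤ k ↔ code x < N k (s x) := by
    intro x k
    constructor
    · intro h
      exact (Nat.find_spec (hex x)).trans_le ((hNlt (s x)).monotone h)
    · intro h
      exact Nat.find_min' (hex x) h
  -- computations at the base point
  have hsm' : ∀ m ∈ M, ∀ y, E m y → s y = m := fun m hm y hy => by
    rw [← hsc m (hMB hm) y hy, hsm m hm]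
  have hSle : ∀ m ∈ M, ∀ k, S (N k m) m = eSize ρ {y | E m y ∧ block y ≤ k} m := by
    intro m hm k
    rw [hSM _ m hm]
    congr 1
    ext y
    simp only [mem_ofPred_eq]
    refine and_congr_right fun hy => ?_
    rw [hbl, hsm' m hm y hy]
  have hstep : ∀ m ∈ M, ∀ k, S (N k m) m ≤ eSize ρ {y | E m y ∧ block y = k + 1} m := by
    intro m hm k
    have h1 := hN1 k m
    rw [hSle m hm (k + 1)] at h1
    have hdecomp : {y | E m y ∧ block y ≤ k + 1}
        = {y | E m y ∧ block y ≤ k} ∪ {y | E m y ∧ block y = k + 1} := by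
      ext y
      simp only [mem_ofPred_eq, mem_union]
      constructor
      · rintro ⟨a, b⟩
        rcases Nat.le_succ_iff.1 b with h | h
        · exact Or.inl ⟨a, h⟩
        · exact Or.inr ⟨a, h⟩
      · rintro (⟨a, b⟩ | ⟨a, b⟩)
        · exact ⟨a, by omega⟩
        · exact ⟨a, by omega⟩
    rw [hdecomp, eSize_union, ← hSle m hm k, two_mul] at h1
    · exact (ENNReal.add_le_add_iff_left (hSfin _ _)).1 h1
    · rw [Set.disjoint_left]
      rintro y ⟨_, b⟩ ⟨_, b'⟩
      omega
  have hmono : ∀ m ∈ M, ∀ k, eSize ρ {y | E m y ∧ block y = k} m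
      ≤ eSize ρ {y | E m y ∧ block y = k + 1} m := by
    intro m hm k
    refine le_trans ?_ (hstep m hm k)
    rw [hSle m hm k]
    refine eSize_mono ?_ m
    rintro y ⟨h1, h2⟩
    exact ⟨h1, h2.le⟩
  have hne : ∀ m ∈ M, ∀ k, ∃ y, E m y ∧ block y = k := by
    intro m hm k
    by_contra hcon
    have hempty : {y | E m y ∧ block y = k} = ∅ := by
      rw [Set.eq_empty_iff_forall_notMem]
      intro y hy
      exact hcon ⟨y, hy⟩
    cases k with
    | zero =>
      have h1 := hNpos 0 m
      rw [hSle m hm 0] at h1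
      have : {y | E m y ∧ block y ≤ 0} = ∅ := by
        rw [← hempty]; ext y; simp
      rw [this, eSize_empty] at h1
      simp at h1
    | succ k =>
      have h1 := (hNpos k m).trans (hstep m hm k)
      rw [hempty, eSize_empty] at h1
      simp at h1
  have hne' : ∀ x ∈ B, ∀ k, ∃ y, E x y ∧ block y = k := by
    intro x hx k
    obtain ⟨y, h1, h2⟩ := hne (s x) (hsM x hx) k
    exact ⟨y, hE.1.trans (hsE x hx) h1, h2⟩
  have hEset : ∀ x ∈ B, ∀ k, {y | E x y ∧ block y = k} = {y | E (s x) y ∧ block y = k} := by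
    intro x hx k
    ext y
    exact and_congr_left fun _ => ⟨fun h => hE.1.trans (hE.1.symm (hsE x hx)) h,
      fun h => hE.1.trans (hsE x hx) h⟩
  obtain ⟨g, hg, hgs⟩ := exists_selector hT (fun x y => E x y ∧ block y = block x + 1)
    (fun x y h => h.1) (by
      intro n
      refine MeasurableSet.inter ((measurable_id.prodMk (T n).measurable) hE.2.1) ?_
      exact measurableSet_eq_fun (hblock.comp (T n).measurable) (hblock.add_const 1))
  refine ⟨block, g, hblock, hg, ?_, ?_, ?_, fun x hx => hne' x hx 0⟩
  · intro x hx
    obtain ⟨y, hy⟩ := hne' x hx (block x + 1)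
    exact hgs x y hy
  · intro x hx k
    rw [hEset x hx]
    refine (hcfin (s x) (hMB (hsM x hx)) (N k (s x))).subset ?_
    rintro y ⟨h1, h2⟩
    refine ⟨h1, ?_⟩
    have := (hbl y k).1 h2.le
    rwa [hsm' (s x) (hsM x hx) y h1] at this
  · intro x hx k
    rw [hEset x hx, hEset x hx]
    have hE' := hE.1.symm (hsE x hx)
    rw [eSize_base hρ (Y := {y | E (s x) y ∧ block y = k}) (fun y hy => hE.1.symm hy.1) hE',
      eSize_base hρ (Y := {y | E (s x) y ∧ block y = k + 1}) (fun y hy => hE.1.symm hy.1) hE']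
    exact mul_le_mul_left (hmono (s x) (hsM x hx) k) _

/-- The Borel successor map inside a color class. -/
lemma exists_succ [MeasurableSpace X] [StandardBorelSpace X]
    {E : X → X → Prop} (hE : IsCBER E) {ρ : X → X → ℝ} (hρ : IsCocycle E ρ)
    {T : ℕ → X ≃ᵐ X} (hT : FMSys E T) (c : X → ℕ) (δ : ℝ) (hc : Measurable c) (hδ : 0 < δ)
    (hlac : ∀ x y z, E x y → E x z → c y = c z →
        ⌊Real.log (ρ y x) / δ⌋ = ⌊Real.log (ρ z x) / δ⌋ → y = z) :
    ∃ σ : X → X, Measurable σ ∧ ∀ x, (∃ y, E x y ∧ c y = c x ∧ 1 < ρ y x) →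
      (E x (σ x) ∧ c (σ x) = c x ∧ 1 < ρ (σ x) x ∧
        ∀ z, E x z → (c z = c x → 1 < ρ z x → ρ (σ x) x ≤ ρ z x)) := by
  classical
  have hr : ∀ n, Measurable fun x => ρ (T n x) x := fun n =>
    hρ.1.comp ((T n).measurable.prodMk measurable_id)
  have hcT : ∀ n, MeasurableSet {x | c (T n x) = c x} := fun n =>
    measurableSet_eq_fun (hc.comp (T n).measurable) hc
  have h1T : ∀ n, MeasurableSet {x | 1 < ρ (T n x) x} := fun n =>
    measurableSet_lt measurable_const (hr n)
  obtain ⟨σ, hσ, hsel⟩ := exists_selector hT (fun x y => E x y ∧ c y = c x ∧ 1 < ρ y x ∧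
        ∀ z, E x z → (c z = c x → 1 < ρ z x → ρ y x ≤ ρ z x)) (fun x y h => h.1) (by
      intro n
      refine MeasurableSet.inter ((measurable_id.prodMk (T n).measurable) hE.2.1)
        ((hcT n).inter ((h1T n).inter ?_))
      refine measurableSet_forall hT (fun x z => c z = c x → 1 < ρ z x → ρ (T n x) x ≤ ρ z x) ?_
      intro m
      have : {x | c (T m x) = c x → 1 < ρ (T m x) x → ρ (T n x) x ≤ ρ (T m x) x}
          = {x | c (T m x) = c x}ᶜ ∪ ({x | 1 < ρ (T m x) x}ᶜ ∪
            {x | ρ (T n x) x ≤ ρ (T m x) x}) := by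
        ext x
        simp only [mem_ofPred_eq, mem_union, mem_compl_iff]
        tauto
      rw [this]
      exact (hcT m).compl.union ((h1T m).compl.union (measurableSet_le (hr n) (hr m))))
  refine ⟨σ, hσ, ?_⟩
  rintro x ⟨y0, h1, h2, h3⟩
  have hnn : ∀ z, 1 < ρ z x → 0 ≤ ⌊Real.log (ρ z x) / δ⌋ := fun z hz =>
    Int.floor_nonneg.2 (div_nonneg (Real.log_nonneg hz.le) hδ.le)
  have hex : ∃ n : ℕ, ∃ z, (E x z ∧ c z = c x ∧ 1 < ρ z x) ∧
      ⌊Real.log (ρ z x) / δ⌋ = n :=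
    ⟨_, y0, ⟨h1, h2, h3⟩, (Int.toNat_of_nonneg (hnn y0 h3)).symm⟩
  obtain ⟨y, ⟨hy1, hy2, hy3⟩, hy4⟩ := Nat.find_spec hex
  refine hsel x y ⟨hy1, hy2, hy3, ?_⟩
  intro z hz1 hz2 hz3
  have hle : Nat.find hex ≤ ⌊Real.log (ρ z x) / δ⌋.toNat :=
    Nat.find_min' hex ⟨z, ⟨hz1, hz2, hz3⟩, (Int.toNat_of_nonneg (hnn z hz3)).symm⟩
  have hle' : ⌊Real.log (ρ y x) / δ⌋ ≤ ⌊Real.log (ρ z x) / δ⌋ := by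
    rw [hy4, ← Int.toNat_of_nonneg (hnn z hz3)]
    exact_mod_cast hle
  rcases hle'.lt_or_eq with hlt | heq
  · have h5 : Real.log (ρ y x) / δ < Real.log (ρ z x) / δ := by
      by_contra hcon
      exact absurd (Int.floor_mono (not_lt.1 hcon)) (not_le.2 hlt)
    have h6 : Real.log (ρ y x) < Real.log (ρ z x) := (div_lt_div_iff_of_pos_right hδ).1 h5
    exact ((Real.log_lt_log_iff (by linarith) (by linarith)).1 h6).le
  · rw [hlac x y z hy1 hz1 (hy2.trans hz2.symm) heq]

lemma exists_compression [MeasurableSpace X] [StandardBorelSpace X]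
    {E : X → X → Prop} (hE : IsCBER E) {ρ : X → X → ℝ} (hρ : IsCocycle E ρ)
    (hsm : Smooth E ρ) {T : ℕ → X ≃ᵐ X} (hT : FMSys E T)
    (hinf : ∀ m, eSize ρ {y | E m y} m = ⊤) :
    ∃ (F : X → X → Prop) (hF : Equivalence F), IsFinSubequiv E F ∧
      ∃ φ : Quotient (Setoid.mk F hF) → Quotient (Setoid.mk F hF),
        Measurable φ ∧ Function.Injective φ ∧
        QuotCompressionOn E ρ Set.univ (Setoid.mk F hF) φ := by
  classical
  obtain ⟨c, δ, hc, hδ, hlac⟩ := exists_lacunary hE hρ hsm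
  obtain ⟨σ, hσ, hσs⟩ := exists_succ hE hρ hT c δ hc hδ hlac
  have hr : ∀ n, Measurable fun x => ρ (T n x) x := fun n =>
    hρ.1.comp ((T n).measurable.prodMk measurable_id)
  have hEr := hE.1.refl
  have hEs : ∀ {x y}, E x y → E y x := fun h => hE.1.symm h
  have hEt : ∀ {x y z}, E x y → E y z → E x z := fun h h' => hE.1.trans h h'
  have heq1 : ∀ x y, E x y → c x = c y → ρ y x ≤ 1 → ρ x y ≤ 1 → x = y := by
    intro x y h1 h2 h3 h4
    have hmul := cocycle_mul_symm hE hρ h1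
    have hp : 0 < ρ x y := hρ.2.1 h1
    have hp' : 0 < ρ y x := hρ.2.1 (hEs h1)
    have h5 : ρ y x = 1 := by nlinarith
    refine hlac x x y (hEr x) h1 h2 ?_
    rw [h5, cocycle_self hE hρ]
  let M : Set X := {y | ∀ z, E y z → (c y ≤ c z ∧ (c z = c y → ρ z y ≤ 1))}
  have hM : MeasurableSet M := by
    refine measurableSet_forall hT (fun y z => c y ≤ c z ∧ (c z = c y → ρ z y ≤ 1)) fun n => ?_
    refine MeasurableSet.inter (measurableSet_le hc (hc.comp (T n).measurable)) ?_
    have : {x | c (T n x) = c x → ρ (T n x) x ≤ 1}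
        = {x | c (T n x) = c x}ᶜ ∪ {x | ρ (T n x) x ≤ 1} := by
      ext x
      simp only [mem_ofPred_eq, mem_union, mem_compl_iff]
      tauto
    change MeasurableSet {x | c (T n x) = c x → ρ (T n x) x ≤ 1}
    rw [this]
    exact ((measurableSet_eq_fun (hc.comp (T n).measurable) hc).compl.union
      (measurableSet_le (hr n) measurable_const))
  have hMu : ∀ x ∈ M, ∀ y ∈ M, E x y → x = y := by
    intro x hx y hy hxy
    have h1 := hx y hxy
    have h2 := hy x (hEs hxy)
    have hcc : c x = c y := le_antisymm h1.1 h2.1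
    exact heq1 x y hxy hcc (h1.2 hcc.symm) (h2.2 hcc)
  let B : Set X := {x | ∃ y, E x y ∧ y ∈ M}
  have hB : MeasurableSet B :=
    measurableSet_exists hT (fun _ y => y ∈ M) fun n => (T n).measurable hM
  have hBE : ∀ x y, E x y → x ∈ B → y ∈ B := by
    rintro x y hxy ⟨m, h1, h2⟩
    exact ⟨m, hEt (hEs hxy) h1, h2⟩
  have hMB : M ⊆ B := fun m hm => ⟨m, hEr m, hm⟩
  obtain ⟨s, hs, hss⟩ := exists_selector hT (fun x y => E x y ∧ y ∈ M) (fun x y h => h.1)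
    (fun n => MeasurableSet.inter ((measurable_id.prodMk (T n).measurable) hE.2.1)
      ((T n).measurable hM))
  have hsB : ∀ x ∈ B, E x (s x) ∧ s x ∈ M := by
    rintro x ⟨y, hy⟩
    exact hss x y hy
  have hsc : ∀ x ∈ B, ∀ y, E x y → s x = s y := by
    intro x hx y hxy
    have h1 := hsB x hx
    have h2 := hsB y (hBE x y hxy hx)
    exact hMu _ h1.2 _ h2.2 (hEt (hEs h1.1) (hEt hxy h2.1))
  have hsm : ∀ m ∈ M, s m = m := by
    intro m hm
    have h1 := hsB m (hMB hm)
    exact hMu _ h1.2 _ hm (hEs h1.1)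
  let code : X → ℕ := fun y => Encodable.encode (c y, ⌊Real.log (ρ y (s y)) / δ⌋)
  have hcode : Measurable code := by
    have h1 : Measurable (Encodable.encode : ℕ × ℤ → ℕ) := measurable_of_countable _
    refine h1.comp (hc.prodMk (Int.measurable_floor.comp (Measurable.div_const ?_ δ)))
    exact Real.measurable_log.comp (hρ.1.comp (measurable_id.prodMk hs))
  have hinj : ∀ x ∈ B, ∀ y, E x y → code x = code y → x = y := by
    intro x hx y hxy h
    have h1 := Encodable.encode_injective h
    rw [Prod.mk.injEq, ← hsc x hx y hxy] at h1
    have h2 := (hsB x hx).1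
    exact hlac (s x) x y (hEs h2) (hEt (hEs h2) hxy) h1.1 h1.2
  obtain ⟨block, g, hblock, hg, hgs, hbfin, hbmono, hb0⟩ :=
    exists_blocks hE hρ hT B M hM hBE s hs (fun x hx => (hsB x hx).2)
      (fun x hx => (hsB x hx).1) hsc hMB hsm code hcode hinj (fun m _ => hinf m)
  -- the unbounded part
  let A : Set X := {x | x ∉ B ∧ ∀ z, E x z → c x ≤ c z}
  have hA : MeasurableSet A :=
    hB.compl.inter (measurableSet_forall hT (fun x z => c x ≤ c z) fun n =>
      measurableSet_le hc (hc.comp (T n).measurable))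
  have hAσ : ∀ x ∈ A, E x (σ x) ∧ c (σ x) = c x ∧ 1 < ρ (σ x) x ∧
        ∀ z, E x z → (c z = c x → 1 < ρ z x → ρ (σ x) x ≤ ρ z x) := by
    rintro x ⟨h1, h2⟩
    apply hσs
    by_contra hcon
    apply h1
    refine ⟨x, hEr x, fun z hz => ⟨h2 z hz, fun hcz => ?_⟩⟩
    by_contra hlt
    exact hcon ⟨z, hz, hcz, not_le.1 hlt⟩
  have hAA : ∀ x ∈ A, σ x ∈ A := by
    intro x hx
    obtain ⟨h1, h2, -, -⟩ := hAσ x hx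
    refine ⟨fun h => hx.1 (hBE _ _ (hEs h1) h), fun z hz => ?_⟩
    rw [h2]; exact hx.2 z (hEt h1 hz)
  have hσinj : ∀ x ∈ A, ∀ y ∈ A, σ x = σ y → x = y := by
    have key : ∀ x ∈ A, ∀ y ∈ A, σ x = σ y → ρ y x ≤ 1 := by
      intro x hx y hy h
      obtain ⟨h1, h2, h3, h4⟩ := hAσ x hx
      obtain ⟨h1', h2', h3', h4'⟩ := hAσ y hy
      rw [← h] at h1' h2' h3'
      by_contra hlt
      have hxy : E x y := hEt h1 (hEs h1')
      have h5 := h4 y hxy (h2'.symm.trans h2) (not_le.1 hlt)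
      have h6 : ρ (σ x) x = ρ (σ x) y * ρ y x := hρ.2.2 (hEs h1') (hEs hxy)
      have h7 : 0 < ρ y x := hρ.2.1 (hEs hxy)
      nlinarith
    intro x hx y hy h
    have h1 := (hAσ x hx)
    have h1' := (hAσ y hy)
    rw [← h] at h1'
    exact heq1 x y (hEt h1.1 (hEs h1'.1)) (h1.2.1.symm.trans h1'.2.1) (key x hx y hy h)
      (key y hy x hx h.symm)
  -- the finite subequivalence relation
  let F : X → X → Prop := fun x y => x = y ∨ (x ∈ B ∧ E x y ∧ block x = block y)
  have hFE : ∀ {x y}, F x y → E x y := by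
    rintro x y (rfl | h)
    · exact hEr x
    · exact h.2.1
  have hF : Equivalence F := by
    refine ⟨fun x => Or.inl rfl, ?_, ?_⟩
    · rintro x y (rfl | ⟨h1, h2, h3⟩)
      · exact Or.inl rfl
      · exact Or.inr ⟨hBE x y h2 h1, hEs h2, h3.symm⟩
    · rintro x y z (rfl | ⟨h1, h2, h3⟩) (rfl | ⟨h4, h5, h6⟩)
      · exact Or.inl rfl
      · exact Or.inr ⟨h4, h5, h6⟩
      · exact Or.inr ⟨h1, h2, h3⟩
      · exact Or.inr ⟨h1, hEt h2 h5, h3.trans h6⟩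
  have hFB : ∀ x ∈ B, ∀ y, F x y ↔ E x y ∧ block x = block y := by
    intro x hx y
    constructor
    · rintro (rfl | h)
      · exact ⟨hEr x, rfl⟩
      · exact h.2
    · exact fun h => Or.inr ⟨hx, h⟩
  have hFnB : ∀ x, x ∉ B → ∀ y, F x y → x = y := by
    rintro x hx y (h | h)
    · exact h
    · exact absurd h.1 hx
  have hFfin : IsFinSubequiv E F := by
    refine ⟨hF, ?_, fun x y h => hFE h, ?_⟩
    · refine MeasurableSet.union (measurableSet_eq_fun measurable_fst measurable_snd)
        (MeasurableSet.inter (measurable_fst hB) (hE.2.1.inter ?_))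
      exact measurableSet_eq_fun (hblock.comp measurable_fst) (hblock.comp measurable_snd)
    · intro x
      by_cases hx : x ∈ B
      · refine (hbfin x hx (block x)).subset fun y hy => ?_
        have := (hFB x hx y).1 hy
        exact ⟨this.1, this.2.symm⟩
      · refine (Set.finite_singleton x).subset fun y hy => ?_
        exact (hFnB x hx y hy).symm
  -- the map
  let G : X → X := fun x => if x ∈ B then g x else if x ∈ A then σ x else x
  have hG : Measurable G := Measurable.ite hB hg (Measurable.ite hA hσ measurable_id)
  have GB : ∀ x ∈ B, G x = g x := fun x hx => by simp only [G, hx, if_true]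
  have GA : ∀ x ∈ A, G x = σ x := fun x hx => by
    simp only [G, hx, hx.1, if_true, if_false]
  have Gid : ∀ x, x ∉ B → x ∉ A → G x = x := fun x h1 h2 => by
    simp only [G, h1, h2, if_false]
  have hGE : ∀ x, E x (G x) := by
    intro x
    by_cases h1 : x ∈ B
    · rw [GB x h1]; exact (hgs x h1).1
    · by_cases h2 : x ∈ A
      · rw [GA x h2]; exact (hAσ x h2).1
      · rw [Gid x h1 h2]; exact hEr x
  have hGBiff : ∀ x, G x ∈ B ↔ x ∈ B := fun x =>
    ⟨fun h => hBE _ _ (hEs (hGE x)) h, fun h => hBE _ _ (hGE x) h⟩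
  have hGinj : ∀ x y, x ∉ B → y ∉ B → G x = G y → x = y := by
    intro x y hx hy h
    by_cases h1 : x ∈ A <;> by_cases h2 : y ∈ A
    · rw [GA x h1, GA y h2] at h
      exact hσinj x h1 y h2 h
    · rw [GA x h1, Gid y hy h2] at h
      exact absurd (h ▸ hAA x h1) h2
    · rw [GA y h2, Gid x hx h1] at h
      exact absurd (h ▸ hAA y h2) h1
    · rwa [Gid x hx h1, Gid y hy h2] at h
  have hGF : ∀ x y, F x y ↔ F (G x) (G y) := by
    intro x y
    by_cases hx : x ∈ B
    · rw [hFB x hx, hFB (G x) ((hGBiff x).2 hx)]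
      have hEE : E x y ↔ E (G x) (G y) :=
        ⟨fun h => hEt (hEs (hGE x)) (hEt h (hGE y)),
          fun h => hEt (hGE x) (hEt h (hEs (hGE y)))⟩
      rw [← hEE]
      refine and_congr_right fun hxy => ?_
      have hy := hBE x y hxy hx
      rw [GB x hx, GB y hy, (hgs x hx).2, (hgs y hy).2]
      omega
    · constructor
      · intro h
        rw [hFnB x hx y h]
        exact hF.refl _
      · intro h
        have h1 := hFnB (G x) (fun h => hx ((hGBiff x).1 h)) _ h
        have hy : y ∉ B := by
          intro hy
          apply hx
          rw [← hGBiff, h1, hGBiff]; exact hy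
        rw [hGinj x y hx hy h1]
        exact hF.refl _
  let mk : X → Quotient (Setoid.mk F hF) := Quotient.mk (Setoid.mk F hF)
  have hmk : Measurable mk := measurable_quotient_mk''
  have mk_eq : ∀ x y, mk x = mk y ↔ F x y := fun x y => Quotient.eq
  let φ : Quotient (Setoid.mk F hF) → Quotient (Setoid.mk F hF) :=
    Quotient.lift (fun x => mk (G x)) (fun x y h => (mk_eq _ _).2 ((hGF x y).1 h))
  have hφ : ∀ x y, φ (mk x) = mk y ↔ F (G x) y := fun x y => mk_eq (G x) y
  -- sizes of preimages
  have hnB : ∀ x, x ∉ B → ∀ Y : Set X, (∀ y ∈ Y, F (G y) x) →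
      ∀ y ∈ Y, y ∉ B ∧ G y = x := by
    intro x hx Y hY y hy
    have h1 := hFnB x hx _ (hF.symm (hY y hy))
    refine ⟨fun h => hx ?_, h1.symm⟩
    rw [h1]; exact (hGBiff y).2 h
  have hden : ∀ x, x ∉ B → eSize ρ {y | F y x} x = 1 := by
    intro x hx
    have : {y | F y x} = {x} := by
      ext y
      simp only [mem_ofPred_eq, mem_singleton_iff]
      exact ⟨fun h => (hFnB x hx y (hF.symm h)).symm, fun h => h ▸ hF.refl _⟩
    rw [this, eSize_singleton, cocycle_self hE hρ, ENNReal.ofReal_one]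
  refine ⟨F, hF, hFfin, φ, ?_, ?_, ?_, ?_, ?_⟩
  · exact measurable_from_quotient.2 (hmk.comp hG)
  · intro a b
    induction a using Quotient.inductionOn with | _ x
    induction b using Quotient.inductionOn with | _ y
    intro (h : mk (G x) = mk (G y))
    exact (mk_eq x y).2 ((hGF x y).2 ((mk_eq _ _).1 h))
  · intro x _ y h
    exact ⟨hEt (hGE x) (hFE ((hφ x y).1 h)), mem_univ y⟩
  · intro x _
    have hset : {y | y ∈ univ ∧ φ (mk y) = mk x} = {y | F (G y) x} := by
      ext y; simp [hφ]
    change relSize ρ {y | y ∈ univ ∧ φ (mk y) = mk x} {y | F y x} x ≤ 1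
    rw [hset, relSize]
    refine ENNReal.div_le_of_le_mul ?_
    rw [one_mul]
    by_cases hx : x ∈ B
    · have hmem : ∀ y, F (G y) x → E x y ∧ block y + 1 = block x := by
        intro y hy
        have h1 := (hFB x hx _).1 (hF.symm hy)
        have hyB : y ∈ B := (hGBiff y).1 (hBE x _ h1.1 hx)
        refine ⟨hEt h1.1 (hEs (hGE y)), ?_⟩
        rw [h1.2, GB y hyB, (hgs y hyB).2]
      rcases hk : block x with _ | k
      · have : {y | F (G y) x} = ∅ := by
          rw [Set.eq_empty_iff_forall_notMem]
          intro y hy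
          have := (hmem y hy).2
          omega
        rw [this, eSize_empty]
        exact zero_le
      · refine le_trans (eSize_mono ?_ x) (le_trans (hbmono x hx k) (eSize_mono ?_ x))
        · intro y hy
          have := hmem y hy
          exact ⟨this.1, by omega⟩
        · rintro y ⟨h1, h2⟩
          exact hF.symm ((hFB x hx y).2 ⟨h1, by omega⟩)
    · rw [hden x hx]
      by_cases hemp : ∃ y, F (G y) x
      · obtain ⟨y, hy⟩ := hemp
        have hspec := hnB x hx {y | F (G y) x} (fun y hy => hy)
        have hsub : {y | F (G y) x} ⊆ {y} := by
          intro z hz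
          exact hGinj z y (hspec z hz).1 (hspec y hy).1
            ((hspec z hz).2.trans (hspec y hy).2.symm)
        refine (eSize_mono hsub x).trans ?_
        rw [eSize_singleton, ← ENNReal.ofReal_one]
        refine ENNReal.ofReal_le_ofReal ?_
        obtain ⟨hyB, hyx⟩ := hspec y hy
        by_cases hyA : y ∈ A
        · rw [GA y hyA] at hyx
          have h1 := hAσ y hyA
          rw [hyx] at h1
          have h2 := cocycle_mul_symm hE hρ h1.1
          have h3 : 0 < ρ y x := hρ.2.1 h1.1
          nlinarith [h1.2.2.1]
        · rw [Gid y hyB hyA] at hyx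
          rw [hyx, cocycle_self hE hρ]
      · have : {y | F (G y) x} = ∅ := by
          rw [Set.eq_empty_iff_forall_notMem]
          intro y hy
          exact hemp ⟨y, hy⟩
        rw [this, eSize_empty]
        exact zero_le
  · intro x _
    have hset : ∀ x, {y | y ∈ univ ∧ φ (mk y) = mk x} = {y | F (G y) x} := by
      intro x
      ext y; simp [hφ]
    suffices ∃ y, E x y ∧ relSize ρ {z | F (G z) y} {z | F z y} y < 1 by
      obtain ⟨y, h1, h2⟩ := this
      refine ⟨y, mem_univ y, h1, ?_⟩
      change relSize ρ {z | z ∈ univ ∧ φ (mk z) = mk y} {z | F z y} y < 1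
      rwa [hset]
    by_cases hx : x ∈ B
    · obtain ⟨y, hxy, hy0⟩ := hb0 x hx
      have hy := hBE x y hxy hx
      refine ⟨y, hxy, ?_⟩
      have : {z | F (G z) y} = ∅ := by
        rw [Set.eq_empty_iff_forall_notMem]
        intro z hz
        have h1 := (hFB y hy _).1 (hF.symm hz)
        have hzB : z ∈ B := (hGBiff z).1 (hBE y _ h1.1 hy)
        have h2 := h1.2
        rw [GB z hzB, (hgs z hzB).2] at h2
        omega
      rw [relSize, this, eSize_empty, ENNReal.zero_div]
      exact zero_lt_one
    · have hex : ∃ n, ∃ a, E x a ∧ c a = n := ⟨c x, x, hEr x, rfl⟩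
      obtain ⟨a, hxa, hca⟩ := Nat.find_spec hex
      have haA : a ∈ A := by
        refine ⟨fun h => hx (hBE _ _ (hEs hxa) h), fun z hz => ?_⟩
        rw [hca]
        exact Nat.find_min' hex ⟨z, hEt hxa hz, rfl⟩
      obtain ⟨h1, h2, h3, -⟩ := hAσ a haA
      refine ⟨σ a, hEt hxa h1, ?_⟩
      have hσB : σ a ∉ B := (hAA a haA).1
      rw [relSize, hden _ hσB, div_one]
      have hspec := hnB (σ a) hσB {y | F (G y) (σ a)} (fun y hy => hy)
      have hsub : {y | F (G y) (σ a)} ⊆ {a} := by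
        intro z hz
        exact hGinj z a (hspec z hz).1 haA.1 ((hspec z hz).2.trans (GA a haA).symm)
      refine (eSize_mono hsub _).trans_lt ?_
      rw [eSize_singleton, ← ENNReal.ofReal_one]
      refine (ENNReal.ofReal_lt_ofReal_iff zero_lt_one).2 ?_
      have h4 := cocycle_mul_symm hE hρ h1
      have h5 : 0 < ρ a (σ a) := hρ.2.1 h1
      nlinarith

/-- For smooth Borel cocycles: either there is an injective Borel compression of the quotient
of `ρ` by a finite Borel subequivalence relation of `E`, or there is a `ρ`-invariant Borel
probability measure -- and not both. -/
theorem stmt3 [MeasurableSpace X] [StandardBorelSpace X]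
    (E : X → X → Prop) (hE : IsCBER E)
    (ρ : X → X → ℝ) (hρ : IsCocycle E ρ) (hsm : Smooth E ρ) :
    Xor'
      (∃ (F : X → X → Prop) (hF : Equivalence F), IsFinSubequiv E F ∧
        ∃ φ : Quotient (Setoid.mk F hF) → Quotient (Setoid.mk F hF),
          Measurable φ ∧ Function.Injective φ ∧
          QuotCompressionOn E ρ Set.univ (Setoid.mk F hF) φ)
      (∃ μ : Measure X, IsProbabilityMeasure μ ∧ IsInvariant E ρ μ) := by
  obtain ⟨T, hT1, hT2, hT3⟩ := exists_involutions hE hρ hsm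
  have hT : FMSys E T := ⟨hT1, hT2, hT3⟩
  by_cases hm : ∃ m, eSize ρ {y | E m y} m ≠ ⊤
  · obtain ⟨m, hm⟩ := hm
    have hμ := measure_of_finite hE hρ m hm
    refine Or.inr ⟨hμ, ?_⟩
    rintro ⟨F, hF, hfin, φ, hφ, -, hcomp⟩
    obtain ⟨μ, h1, h2⟩ := hμ
    exact not_both hE hρ hT F hF hfin φ hφ hcomp μ h1 h2
  · have hinf : ∀ m, eSize ρ {y | E m y} m = ⊤ := by
      intro m
      by_contra h
      exact hm ⟨m, h⟩
    have hc := exists_compression hE hρ hsm hT hinf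
    refine Or.inl ⟨hc, ?_⟩
    rintro ⟨μ, h1, h2⟩
    obtain ⟨F, hF, hfin, φ, hφ, -, hcomp⟩ := hc
    exact not_both hE hρ hT F hF hfin φ hφ hcomp μ h1 h2

end CocycleNadkarni
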